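/- One-step divergence identity for Newton tensors of the augmented Hessian (identity (18), proved within Lemma 3.1). Let Ω ⊆ ℝⁿ be a domain with n ≥ 3, let u ∈ C³(Ω), let H : Ω×ℝ×ℝⁿ → Sym_n(ℝ) be C¹, and let 1 ≤ k ≤ n−1. Then at every point of Ω and for every index j, Σ_i ∂_i(T_k(A_H[u])^{ij}) = Σ_{i,l} T_{k−1}(A_H[u])^{il} · (∂_i((H[u])_{lj}) − ∂_j((H[u])_{il})) − Σ_{i,l} ∂_i(T_{k−1}(A_H[u])^{il}) · (A_H[u])_{lj}, where ∂_i denotes the i-th partial derivative of the indicated composite function of x. -/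

import Mathlib

open MeasureTheory Metric Set Matrix

noncomputable section

/-- The `k`-th elementary symmetric polynomial of the eigenvalues of an `n × n` real
matrix, defined via the coefficients of the characteristic polynomial. -/
def esymmMat {n : ℕ} (k : ℕ) (A : Matrix (Fin n) (Fin n) ℝ) : ℝ :=
  (-1 : ℝ) ^ k * A.charpoly.coeff (n - k)

/-- `λ(A) ∈ Γ_k^+`, i.e. `σ_j(A) > 0` for all `1 ≤ j ≤ k`. -/
def GammaPlus {n : ℕ} (k : ℕ) (A : Matrix (Fin n) (Fin n) ℝ) : Prop :=
  ∀ j : ℕ, 1 ≤ j → j ≤ k → 0 < esymmMat j A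

/-- The Newton tensors `T_0(A) = I`, `T_j(A) = σ_j(A) I - T_{j-1}(A) A`. -/
def newtonT {n : ℕ} : ℕ → Matrix (Fin n) (Fin n) ℝ → Matrix (Fin n) (Fin n) ℝ
  | 0, _ => 1
  | (j + 1), A => esymmMat (j + 1) A • (1 : Matrix (Fin n) (Fin n) ℝ) - newtonT j A * A

/-- `i`-th partial derivative. -/
def pd {n : ℕ} (i : Fin n) (w : (Fin n → ℝ) → ℝ) (x : Fin n → ℝ) : ℝ :=
  fderiv ℝ w x (Pi.single i 1)

/-- Gradient as a vector. -/
def grad {n : ℕ} (w : (Fin n → ℝ) → ℝ) (x : Fin n → ℝ) : Fin n → ℝ :=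
  fun i => pd i w x

/-- Hessian matrix. -/
def hess {n : ℕ} (w : (Fin n → ℝ) → ℝ) (x : Fin n → ℝ) : Matrix (Fin n) (Fin n) ℝ :=
  Matrix.of fun i j => pd i (pd j w) x

/-- Squared Euclidean norm of a vector. -/
def normSq {n : ℕ} (ξ : Fin n → ℝ) : ℝ := ∑ i, ξ i ^ 2

/-- Euclidean norm of a vector. -/
def vnorm {n : ℕ} (ξ : Fin n → ℝ) : ℝ := Real.sqrt (∑ i, ξ i ^ 2)

/-- Operator norm of a matrix, viewed as a linear map between Euclidean spaces. -/
def matNorm {n : ℕ} (M : Matrix (Fin n) (Fin n) ℝ) : ℝ :=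
  ‖LinearMap.toContinuousLinearMap (Matrix.toEuclideanLin M)‖

/-- Laplacian. -/
def lapl {n : ℕ} (w : (Fin n → ℝ) → ℝ) (x : Fin n → ℝ) : ℝ := ∑ l, pd l (pd l w) x

/-- `W^{2,p}` norm (with classical derivatives) on a set. -/
def W2pNorm {n : ℕ} (p : ℝ) (w : (Fin n → ℝ) → ℝ) (B : Set (Fin n → ℝ)) : ℝ :=
  (∫ x in B, (|w x| ^ p + vnorm (grad w x) ^ p + matNorm (hess w x) ^ p)) ^ (1 / p)

/-- `C^{1,1}_loc` on a set: continuously differentiable with locally Lipschitz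
first derivatives. -/
def C11On {E F : Type*} [NormedAddCommGroup E] [NormedSpace ℝ E]
    [NormedAddCommGroup F] [NormedSpace ℝ F] (f : E → F) (s : Set E) : Prop :=
  ContDiffOn ℝ 1 f s ∧
    ∀ x ∈ s, ∃ (K : NNReal) (t : Set E), t ∈ nhdsWithin x s ∧
      LipschitzOnWith K (fderivWithin ℝ f s) t

/-- First order difference quotient `∇_l^h`. -/
def dq {n : ℕ} (l : Fin n) (h : ℝ) (w : (Fin n → ℝ) → ℝ) (x : Fin n → ℝ) : ℝ :=
  (w (x + h • (Pi.single l 1 : Fin n → ℝ)) - w x) / h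

/-- Second order difference quotient `Δ_{ll}^h`. -/
def ddq {n : ℕ} (l : Fin n) (h : ℝ) (w : (Fin n → ℝ) → ℝ) (x : Fin n → ℝ) : ℝ :=
  (w (x + h • (Pi.single l 1 : Fin n → ℝ)) - 2 * w x + w (x - h • (Pi.single l 1 : Fin n → ℝ))) / h ^ 2

/-- `L^s` seminorm (as an extended real number) of a function on a set. -/
def lpN {n : ℕ} (s : ℝ) (w : (Fin n → ℝ) → ℝ) (S : Set (Fin n → ℝ)) : ENNReal :=
  (∫⁻ x in S, ENNReal.ofReal (|w x| ^ s)) ^ (1 / s)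

end

open Polynomial in
/-- Coefficientwise directional derivative of a polynomial valued function. -/
def HasPD {n : ℕ} (P : (Fin n → ℝ) → ℝ[X]) (Q : ℝ[X]) (x v : Fin n → ℝ) : Prop :=
  ∀ m, DifferentiableAt ℝ (fun y => (P y).coeff m) x ∧
    fderiv ℝ (fun y => (P y).coeff m) x v = Q.coeff m

namespace HasPD
open Polynomial
variable {n : ℕ} {P R : (Fin n → ℝ) → ℝ[X]} {Q S : ℝ[X]} {x v : Fin n → ℝ}

theorem const (c : ℝ[X]) : HasPD (fun _ => c) 0 x v := by
  intro m
  simp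

theorem sum {ι : Type*} (s : Finset ι) {P : ι → (Fin n → ℝ) → ℝ[X]} {Q : ι → ℝ[X]}
    (h : ∀ i ∈ s, HasPD (P i) (Q i) x v) :
    HasPD (fun y => ∑ i ∈ s, P i y) (∑ i ∈ s, Q i) x v := by
  intro m
  simp only [finsetSum_coeff]
  constructor
  · exact DifferentiableAt.fun_sum fun i hi => (h i hi m).1
  · rw [fderiv_fun_sum fun i hi => (h i hi m).1]
    simp only [_root_.sum_apply]
    exact Finset.sum_congr rfl fun i hi => (h i hi m).2

theorem mul (h : HasPD P Q x v) (h' : HasPD R S x v) :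
    HasPD (fun y => P y * R y) (Q * R x + P x * S) x v := by
  intro m
  simp only [coeff_mul, coeff_add]
  have hd : ∀ p ∈ Finset.HasAntidiagonal.antidiagonal m, DifferentiableAt ℝ
      (fun y => (P y).coeff p.1 * (R y).coeff p.2) x :=
    fun p _ => (h p.1).1.fun_mul (h' p.2).1
  constructor
  · exact DifferentiableAt.fun_sum hd
  · rw [fderiv_fun_sum hd]
    simp only [_root_.sum_apply]
    rw [← Finset.sum_add_distrib]
    refine Finset.sum_congr rfl fun p _ => ?_
    rw [fderiv_fun_mul (h p.1).1 (h' p.2).1]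
    simp [(h p.1).2, (h' p.2).2]
    ring

theorem prod {ι : Type*} [DecidableEq ι] (s : Finset ι) {P : ι → (Fin n → ℝ) → ℝ[X]} {Q : ι → ℝ[X]}
    (h : ∀ i ∈ s, HasPD (P i) (Q i) x v) :
    HasPD (fun y => ∏ i ∈ s, P i y)
      (∑ i ∈ s, ∏ l ∈ s, if l = i then Q l else P l x) x v := by
  induction s using Finset.induction_on with
  | empty => simpa using const (x := x) (v := v) (1 : ℝ[X])
  | insert a s ha ih =>
    have h1 := (h a (Finset.mem_insert_self a s)).mul
      (ih fun i hi => h i (Finset.mem_insert_of_mem hi))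
    simp only [Finset.prod_insert ha, Finset.sum_insert ha]
    convert h1 using 2
    · simp only [if_true]
      congr 1
      refine Finset.prod_congr rfl fun l hl => ?_
      rw [if_neg]
      rintro rfl
      exact ha hl
    · rw [Finset.mul_sum]
      refine Finset.sum_congr rfl fun i hi => ?_
      rw [if_neg]
      rintro rfl
      exact ha hi

theorem det {N : ℕ} {M : (Fin n → ℝ) → Matrix (Fin N) (Fin N) ℝ[X]}
    {M' : Matrix (Fin N) (Fin N) ℝ[X]}
    (h : ∀ i j, HasPD (fun y => M y i j) (M' i j) x v) :
    HasPD (fun y => (M y).det) (∑ i, ∑ l, (M x).adjugate i l * M' l i) x v := by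
  have h1 : (∑ i, ∑ l, (M x).adjugate i l * M' l i)
      = ∑ σ : Equiv.Perm (Fin N), (0 * (∏ i, M x (σ i) i) +
        ((Equiv.Perm.sign σ : ℤ) : ℝ[X]) *
          ∑ i, ∏ l, if l = i then M' (σ l) l else M x (σ l) l) := by
    have : ∀ i, ∑ l, (M x).adjugate i l * M' l i
        = ((M x).updateCol i (fun r => M' r i)).det := by
      intro i
      rw [← Matrix.cramer_apply, Matrix.cramer_eq_adjugate_mulVec]
      rfl
    simp only [this, Matrix.det_apply', zero_mul, zero_add, Finset.mul_sum]
    rw [Finset.sum_comm]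
    refine Finset.sum_congr rfl fun σ _ => Finset.sum_congr rfl fun i _ => ?_
    congr 1
    refine Finset.prod_congr rfl fun l _ => ?_
    rw [Matrix.updateCol_apply]
    split_ifs with hl
    · rw [hl]
    · rfl
  rw [h1]
  simp only [Matrix.det_apply']
  exact sum _ fun σ _ => (const _).mul (prod _ fun i _ => h (σ i) i)
end HasPD

theorem adj_coeff_rec {n : ℕ} (A : Matrix (Fin n) (Fin n) ℝ) (i j : Fin n) (m : ℕ) :
    (A.charmatrix.adjugate i j).coeff m
      = A.charpoly.coeff (m + 1) * (1 : Matrix (Fin n) (Fin n) ℝ) i j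
        + ∑ l, (A.charmatrix.adjugate i l).coeff (m + 1) * A l j := by
  have h := congrArg (fun M => (M i j).coeff (m + 1)) (Matrix.adjugate_mul A.charmatrix)
  have e : ∀ l, A.charmatrix l j = (if l = j then Polynomial.X else 0) - Polynomial.C (A l j) := by
    intro l
    rw [Matrix.charmatrix_apply, Matrix.diagonal_apply]
  simp only [Matrix.mul_apply, e, mul_sub, Finset.sum_sub_distrib, mul_ite, mul_zero,
    Finset.sum_ite_eq', Finset.mem_univ, if_true, Polynomial.coeff_sub, Polynomial.coeff_mul_X,
    Polynomial.finsetSum_coeff, Polynomial.coeff_mul_C, Matrix.smul_apply, smul_eq_mul] at h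
  rw [sub_eq_iff_eq_add] at h
  rw [h]
  congr 1
  rw [Matrix.one_apply, Matrix.one_apply, Matrix.charpoly]
  split_ifs <;> simp

theorem adj_coeff_zero {n : ℕ} (A : Matrix (Fin n) (Fin n) ℝ) (m : ℕ) (hm : n ≤ m) :
    ∀ i j, (A.charmatrix.adjugate i j).coeff m = 0 := by
  obtain ⟨N, hN⟩ : ∃ N, ∀ i j, (A.charmatrix.adjugate i j).natDegree < N := by
    refine ⟨(∑ i, ∑ j, (A.charmatrix.adjugate i j).natDegree) + 1, fun i j => ?_⟩
    refine Nat.lt_succ_of_le ?_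
    refine le_trans (Finset.single_le_sum (f := fun j => (A.charmatrix.adjugate i j).natDegree)
      (fun _ _ => Nat.zero_le _) (Finset.mem_univ j)) ?_
    exact Finset.single_le_sum (f := fun i => ∑ j, (A.charmatrix.adjugate i j).natDegree)
      (fun _ _ => Nat.zero_le _) (Finset.mem_univ i)
  have key : ∀ d m, n ≤ m → N ≤ m + d → ∀ i j, (A.charmatrix.adjugate i j).coeff m = 0 := by
    intro d
    induction d with
    | zero =>
      intro m _ h i j
      exact Polynomial.coeff_eq_zero_of_natDegree_lt (lt_of_lt_of_le (hN i j) h)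
    | succ d ih =>
      intro m hm h i j
      rw [adj_coeff_rec, Polynomial.coeff_eq_zero_of_natDegree_lt]
      · simp [ih (m + 1) (by omega) (by omega)]
      · rw [Matrix.charpoly_natDegree_eq_dim, Fintype.card_fin]
        omega
  exact key N m hm (by omega)

theorem adj_coeff_newton {n : ℕ} (A : Matrix (Fin n) (Fin n) ℝ) (m : ℕ) (hm : m + 1 ≤ n) :
    ∀ i j, (A.charmatrix.adjugate i j).coeff (n - (m + 1)) = (-1) ^ m * newtonT m A i j := by
  induction m with
  | zero =>
    intro i j
    have h1 : n - (0 + 1) + 1 = n := by omega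
    have h2 : A.charpoly.coeff n = 1 := by
      have := A.charpoly_monic.coeff_natDegree
      rwa [Matrix.charpoly_natDegree_eq_dim, Fintype.card_fin] at this
    rw [adj_coeff_rec, h1, h2]
    simp [adj_coeff_zero A n le_rfl, newtonT]
  | succ m ih =>
    intro i j
    have h1 : n - (m + 1 + 1) + 1 = n - (m + 1) := by omega
    rw [adj_coeff_rec, h1]
    simp only [ih (by omega), newtonT, esymmMat, Matrix.sub_apply, Matrix.smul_apply, smul_eq_mul,
      Matrix.mul_apply]
    have h3 : ((-1 : ℝ) ^ (m + 1)) * (-1) ^ (m + 1) = 1 := by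
      rw [← mul_pow]; norm_num
    rw [mul_sub, ← mul_assoc, ← mul_assoc, h3, Finset.mul_sum, sub_eq_add_neg,
      ← Finset.sum_neg_distrib, one_mul]
    congr 1
    refine Finset.sum_congr rfl fun l _ => ?_
    ring

theorem esymm_deriv {n : ℕ} (k : ℕ) (hk : k + 1 ≤ n)
    (A : (Fin n → ℝ) → Matrix (Fin n) (Fin n) ℝ) (x : Fin n → ℝ)
    (hA : ∀ i j, DifferentiableAt ℝ (fun y => A y i j) x) :
    DifferentiableAt ℝ (fun y => esymmMat (k + 1) (A y)) x ∧ ∀ p,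
      pd p (fun y => esymmMat (k + 1) (A y)) x
        = ∑ i, ∑ l, newtonT k (A x) i l * pd p (fun y => A y l i) x := by
  have h : ∀ v, HasPD (fun y => (A y).charpoly) (∑ i, ∑ l, (A x).charmatrix.adjugate i l *
      (- Polynomial.C (fderiv ℝ (fun y => A y l i) x v))) x v := by
    intro v
    refine HasPD.det (M := fun y => (A y).charmatrix)
      (M' := Matrix.of fun l i => - Polynomial.C (fderiv ℝ (fun y => A y l i) x v)) ?_
    intro i j m
    simp only [Matrix.charmatrix_apply, Polynomial.coeff_sub, Polynomial.coeff_C, Matrix.of_apply,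
      Polynomial.coeff_neg]
    by_cases hm : m = 0
    · simp only [hm, if_true]
      refine ⟨(differentiableAt_const _).fun_sub (hA i j), ?_⟩
      rw [fderiv_const_sub]
      rfl
    · simp [hm]
  constructor
  · exact (h 0 (n - (k + 1))).1.const_mul _
  · intro p
    have h1 := h (Pi.single p 1) (n - (k + 1))
    unfold pd esymmMat
    rw [fderiv_const_mul h1.1]
    simp only [ContinuousLinearMap.smul_apply, h1.2, Polynomial.finsetSum_coeff, ← Polynomial.C_neg,
      Polynomial.coeff_mul_C, adj_coeff_newton (A x) k hk, smul_eq_mul, Finset.mul_sum]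
    refine Finset.sum_congr rfl fun i _ => Finset.sum_congr rfl fun l _ => ?_
    have h3 : ((-1 : ℝ) ^ (k)) * (-1) ^ (k) = 1 := by
      rw [← mul_pow]; norm_num
    rw [pow_succ]
    linear_combination (newtonT k (A x) i l * fderiv ℝ (fun y => A y l i) x (Pi.single p 1)) * h3

theorem newton_diff {n : ℕ} (k : ℕ) (hk : k ≤ n)
    (A : (Fin n → ℝ) → Matrix (Fin n) (Fin n) ℝ) (x : Fin n → ℝ)
    (hA : ∀ i j, DifferentiableAt ℝ (fun y => A y i j) x) :
    ∀ i j, DifferentiableAt ℝ (fun y => newtonT k (A y) i j) x := by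
  induction k with
  | zero => intro i j; simp [newtonT]
  | succ k ih =>
    intro i j
    simp only [newtonT, Matrix.sub_apply, Matrix.smul_apply, smul_eq_mul, Matrix.mul_apply]
    refine ((esymm_deriv k hk A x hA).1.mul_const _).fun_sub ?_
    exact DifferentiableAt.fun_sum fun l _ => (ih (by omega) i l).fun_mul (hA l j)

theorem pd_newton_succ {n : ℕ} (k : ℕ) (hk : k + 1 ≤ n)
    (A : (Fin n → ℝ) → Matrix (Fin n) (Fin n) ℝ) (x : Fin n → ℝ)
    (hA : ∀ i j, DifferentiableAt ℝ (fun y => A y i j) x) (i j p : Fin n) :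
    pd p (fun y => newtonT (k + 1) (A y) i j) x
      = pd p (fun y => esymmMat (k + 1) (A y)) x * (1 : Matrix (Fin n) (Fin n) ℝ) i j
        - ∑ l, (pd p (fun y => newtonT k (A y) i l) x * A x l j
          + newtonT k (A x) i l * pd p (fun y => A y l j) x) := by
  have hN := newton_diff k (by omega) A x hA
  have hd : ∀ l ∈ Finset.univ, DifferentiableAt ℝ (fun y => newtonT k (A y) i l * A y l j) x :=
    fun l _ => (hN i l).fun_mul (hA l j)
  have he := (esymm_deriv k hk A x hA).1
  simp only [newtonT, Matrix.sub_apply, Matrix.smul_apply, smul_eq_mul, Matrix.mul_apply]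
  unfold pd
  rw [fderiv_fun_sub (he.mul_const _) (DifferentiableAt.fun_sum hd), fderiv_mul_const he,
    fderiv_fun_sum hd]
  simp only [ContinuousLinearMap.sub_apply, ContinuousLinearMap.smul_apply, smul_eq_mul,
    _root_.sum_apply]
  congr 1
  · ring
  · refine Finset.sum_congr rfl fun l _ => ?_
    rw [fderiv_fun_mul (hN i l) (hA l j)]
    simp
    ring

theorem pd_contDiffAt {n : ℕ} {w : (Fin n → ℝ) → ℝ} {x : Fin n → ℝ} {a b : WithTop ℕ∞}
    (hw : ContDiffAt ℝ a w x) (hab : b + 1 ≤ a) (i : Fin n) : ContDiffAt ℝ b (pd i w) x :=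
  (hw.fderiv_right hab).clm_apply contDiffAt_const

theorem pd_comm {n : ℕ} {w : (Fin n → ℝ) → ℝ} {x : Fin n → ℝ}
    (hw : ContDiffAt ℝ 2 w x) (i j : Fin n) : pd i (pd j w) x = pd j (pd i w) x := by
  have hs : IsSymmSndFDerivAt ℝ w x := hw.isSymmSndFDerivAt (by simp)
  have hd : DifferentiableAt ℝ (fderiv ℝ w) x :=
    (hw.fderiv_right (m := 1) (by norm_num)).differentiableAt (by norm_num)
  have e : ∀ a b : Fin n, pd a (pd b w) x
      = fderiv ℝ (fderiv ℝ w) x (Pi.single a 1) (Pi.single b 1) := by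
    intro a b
    change fderiv ℝ (fun y => fderiv ℝ w y (Pi.single b 1)) x (Pi.single a 1) = _
    rw [fderiv_clm_apply hd (differentiableAt_const _)]
    simp
  rw [e, e]
  exact hs _ _

/-- One-step divergence identity for Newton tensors of the augmented
Hessian (identity (18), proved within Lemma 3.1). -/
theorem one_step_divergence_identity_newton_tensors
    {n : ℕ} (hn : 3 ≤ n) (k : ℕ) (hk1 : 1 ≤ k) (hkn : k ≤ n - 1)
    (Ω : Set (Fin n → ℝ)) (hΩ : IsOpen Ω)
    (u : (Fin n → ℝ) → ℝ) (hu : ContDiffOn ℝ 3 u Ω)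
    (H : ((Fin n → ℝ) × ℝ × (Fin n → ℝ)) → Matrix (Fin n) (Fin n) ℝ)
    (hH : ∀ i j : Fin n,
      ContDiffOn ℝ 1 (fun y => H y i j) (Ω ×ˢ ((univ : Set ℝ) ×ˢ (univ : Set (Fin n → ℝ)))))
    (hHsymm : ∀ y ∈ Ω ×ˢ ((univ : Set ℝ) ×ˢ (univ : Set (Fin n → ℝ))), (H y).IsSymm) :
    ∀ x ∈ Ω, ∀ j : Fin n,
      ∑ i, pd i (fun y => newtonT k (hess u y - H (y, u y, grad u y)) i j) x
        = (∑ i, ∑ l,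
            newtonT (k - 1) (hess u x - H (x, u x, grad u x)) i l *
              (pd i (fun y => H (y, u y, grad u y) l j) x
                - pd j (fun y => H (y, u y, grad u y) i l) x))
          - ∑ i, ∑ l,
              pd i (fun y => newtonT (k - 1) (hess u y - H (y, u y, grad u y)) i l) x *
                (hess u x - H (x, u x, grad u x)) l j := by
  intro x hx j
  obtain ⟨k, rfl⟩ : ∃ k', k = k' + 1 := ⟨k - 1, by omega⟩
  have hk : k + 1 ≤ n := by omega
  simp only [Nat.add_sub_cancel]
  have hu3 : ∀ y ∈ Ω, ContDiffAt ℝ 3 u y := fun y hy => hu.contDiffAt (hΩ.mem_nhds hy)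
  have hu2 : ∀ y ∈ Ω, ∀ i, ContDiffAt ℝ 2 (pd i u) y :=
    fun y hy i => pd_contDiffAt (hu3 y hy) (by norm_num) i
  have hu1 : ∀ i l, ContDiffAt ℝ 1 (pd i (pd l u)) x :=
    fun i l => pd_contDiffAt (hu2 x hx l) (by norm_num) i
  have hess_d : ∀ i l, DifferentiableAt ℝ (fun y => hess u y i l) x :=
    fun i l => (hu1 i l).differentiableAt (by norm_num)
  have hH_d : ∀ i l, DifferentiableAt ℝ (fun y => H (y, u y, grad u y) i l) x := by
    intro i l
    have h1 : ContDiffAt ℝ 1 (fun y => H y i l) (x, u x, grad u x) :=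
      (hH i l).contDiffAt ((hΩ.prod (isOpen_univ.prod isOpen_univ)).mem_nhds
        ⟨hx, mem_univ _, mem_univ _⟩)
    have hg : DifferentiableAt ℝ (grad u) x :=
      differentiableAt_pi.2 fun i => (hu2 x hx i).differentiableAt (by norm_num)
    have h2 : DifferentiableAt ℝ (fun y => (y, u y, grad u y)) x :=
      differentiableAt_id.prodMk (((hu3 x hx).differentiableAt (by norm_num)).prodMk hg)
    exact DifferentiableAt.comp x (g := fun y => H y i l) (h1.differentiableAt (by norm_num)) h2
  have hA : ∀ i l, DifferentiableAt ℝ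
      (fun y => (hess u y - H (y, u y, grad u y)) i l) x :=
    fun i l => (hess_d i l).fun_sub (hH_d i l)
  have pdA : ∀ p i l, pd p (fun y => (hess u y - H (y, u y, grad u y)) i l) x
      = pd p (pd i (pd l u)) x - pd p (fun y => H (y, u y, grad u y) i l) x := by
    intro p i l
    have := fderiv_fun_sub (hess_d i l) (hH_d i l)
    exact congrArg (fun L => L (Pi.single p 1)) this
  have hsymH : ∀ p i l, pd p (fun y => H (y, u y, grad u y) i l) x
      = pd p (fun y => H (y, u y, grad u y) l i) x := by
    intro p i l
    unfold pd
    rw [Filter.EventuallyEq.fderiv_eq]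
    filter_upwards [hΩ.mem_nhds hx] with y hy
    exact (hHsymm (y, u y, grad u y) ⟨hy, mem_univ _, mem_univ _⟩).apply _ _
  have hcomm : ∀ p i l, pd p (pd i (pd l u)) x = pd p (pd l (pd i u)) x := by
    intro p i l
    have : pd i (pd l u) =ᶠ[nhds x] pd l (pd i u) := by
      filter_upwards [hΩ.mem_nhds hx] with y hy
      exact pd_comm ((hu3 y hy).of_le (by norm_num)) i l
    have h2 := this.fderiv_eq (𝕜 := ℝ)
    unfold pd at h2 ⊢
    rw [h2]
  have hthird : ∀ i l, pd j (pd l (pd i u)) x = pd i (pd l (pd j u)) x := by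
    intro i l
    rw [hcomm j l i, hcomm i l j]
    exact pd_comm (hu2 x hx l) j i
  simp only [pd_newton_succ k hk _ x hA, Finset.sum_sub_distrib, Matrix.one_apply, mul_ite, mul_one,
    mul_zero, Finset.sum_ite_eq', Finset.mem_univ, if_true, Finset.sum_add_distrib]
  rw [(esymm_deriv k hk _ x hA).2 j]
  rw [sub_add_eq_sub_sub, sub_right_comm]
  congr 1
  simp only [← Finset.sum_sub_distrib]
  refine Finset.sum_congr rfl fun i _ => Finset.sum_congr rfl fun l _ => ?_
  rw [pdA, pdA, hsymH j l i, hthird]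
  ring
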